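/- Let (X, μ) be a standard Borel probability space and let T be an invertible measure-preserving transformation of (X, μ). For a semimetric ρ and n ≥ 1 put ρ_n^{av}(x,y) = (1/n) Σ_{k=0}^{n-1} ρ(T^k x, T^k y). Then the following are equivalent: (1) T has purely discrete spectrum, i.e., the eigenfunctions of the Koopman operator U_T f = f ∘ T on L²(X, μ) span a dense subspace of L²(X, μ); (2) for every admissible summable semimetric ρ and every ε>0, the ε-entropies H_ε(ρ_n^{av}, μ), n = 1, 2, …, are uniformly bounded; (3) for some admissible summable metric ρ and every ε>0, the ε-entropies H_ε(ρ_n^{av}, μ), n = 1, 2, …, are uniformly bounded. -/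

import Mathlib

open MeasureTheory Filter Function Set
open scoped ENNReal

/-- A semimetric on `X`: a nonnegative function vanishing on the diagonal, symmetric and
satisfying the triangle inequality for all points. -/
def IsSemimetric {X : Type*} (ρ : X → X → ℝ) : Prop :=
  (∀ x y, 0 ≤ ρ x y) ∧ (∀ x, ρ x x = 0) ∧ (∀ x y, ρ x y = ρ y x) ∧
    ∀ x y z, ρ x z ≤ ρ x y + ρ y z

/-- A metric on `X`: a semimetric that separates points. -/
def IsMetricFun {X : Type*} (ρ : X → X → ℝ) : Prop :=
  IsSemimetric ρ ∧ ∀ x y, ρ x y = 0 ↔ x = y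

/-- The semimetric space `(S, ρ)` is separable. -/
def SeparableOn {X : Type*} (ρ : X → X → ℝ) (S : Set X) : Prop :=
  ∃ D : Set X, D ⊆ S ∧ D.Countable ∧ ∀ x ∈ S, ∀ ε : ℝ, 0 < ε → ∃ y ∈ D, ρ x y < ε

/-- A semimetric is admissible for `(X, μ)` if it is measurable on `(X × X, μ × μ)` and
separable on a subset of full measure. -/
def Admissible {X : Type*} [MeasurableSpace X] (μ : Measure X) (ρ : X → X → ℝ) : Prop :=
  Measurable (Function.uncurry ρ) ∧
    ∃ S : Set X, MeasurableSet S ∧ μ Sᶜ = 0 ∧ SeparableOn ρ S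

/-- An `ε`-cover of size `k`: `X = X₀ ∪ X₁ ∪ ⋯ ∪ X_k` with `μ(X₀) < ε` and
`diam_ρ(X_j) < ε` for `j = 1, …, k`. -/
def IsEpsCover {X : Type*} [MeasurableSpace X] (μ : Measure X) (ρ : X → X → ℝ)
    (ε : ℝ) (k : ℕ) : Prop :=
  ∃ A : Fin (k + 1) → Set X, (∀ i, MeasurableSet (A i)) ∧ (⋃ i, A i) = Set.univ ∧
    μ (A 0) < ENNReal.ofReal ε ∧
    ∀ i, i ≠ 0 → ∀ x ∈ A i, ∀ y ∈ A i, ρ x y < ε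

/-- The `ε`-entropy of `(X, μ, ρ)`: the binary logarithm of the smallest size of an
`ε`-cover, and `∞` if there is no finite `ε`-cover. -/
noncomputable def epsEntropy {X : Type*} [MeasurableSpace X] (μ : Measure X)
    (ρ : X → X → ℝ) (ε : ℝ) : ℝ≥0∞ :=
  sInf {h : ℝ≥0∞ | ∃ k : ℕ, IsEpsCover μ ρ ε k ∧ h = ENNReal.ofReal (Real.logb 2 k)}

/-- The m-norm of `f`: the infimum of the `L¹`-norms of measurable semimetrics
dominating `|f|` almost everywhere (`∞` if there is no such semimetric). -/
noncomputable def mnorm {X : Type*} [MeasurableSpace X] (μ : Measure X)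
    (f : X → X → ℝ) : ℝ≥0∞ :=
  sInf {c : ℝ≥0∞ | ∃ ρ : X → X → ℝ, IsSemimetric ρ ∧ Measurable (Function.uncurry ρ) ∧
    (∀ᵐ p ∂(μ.prod μ), |f p.1 p.2| ≤ ρ p.1 p.2) ∧
    c = ∫⁻ p, ENNReal.ofReal (ρ p.1 p.2) ∂(μ.prod μ)}

/-- The m-distance between two functions. -/
noncomputable def mdist {X : Type*} [MeasurableSpace X] (μ : Measure X)
    (f g : X → X → ℝ) : ℝ≥0∞ :=
  mnorm μ fun x y => f x y - g x y

/-- The `L¹(X × X, μ × μ)` distance between two functions. -/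
noncomputable def L1dist {X : Type*} [MeasurableSpace X] (μ : Measure X)
    (f g : X → X → ℝ) : ℝ≥0∞ :=
  ∫⁻ p, ENNReal.ofReal |f p.1 p.2 - g p.1 p.2| ∂(μ.prod μ)

section Hilbert

variable {H : Type*} [NormedAddCommGroup H] [InnerProductSpace ℂ H]

/-- The Cesàro averages of the rank one operators `|Uⁱ f⟩⟨Uⁱ f|`. -/
noncomputable def averagedRankOne (U : H →ₗᵢ[ℂ] H) (f : H) (n : ℕ) : H →L[ℂ] H :=
  ∑ i ∈ Finset.range (n + 1),
    ((n + 1 : ℝ)⁻¹) • InnerProductSpace.rankOne ℂ (U^[i] f) (U^[i] f)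

lemma norm_iterate_linearIsometry (U : H →ₗᵢ[ℂ] H) (f : H) (i : ℕ) : ‖U^[i] f‖ = ‖f‖ := by
  induction i with
  | zero => rfl
  | succ k ih => rw [Function.iterate_succ_apply', U.norm_map, ih]

lemma exists_tendsto_averagedRankOne [CompleteSpace H] (U : H →ₗᵢ[ℂ] H) {f : H}
    (hf : TotallyBounded (range fun n : ℕ => U^[n] f)) :
    ∃ S : H →L[ℂ] H, ∃ φ : ℕ → ℕ, StrictMono φ ∧
      Tendsto (fun n => averagedRankOne U f (φ n)) atTop (nhds S) := by
  have hcompact : IsCompact (closure (range fun n : ℕ => U^[n] f)) :=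
    hf.closure.isCompact_of_isClosed isClosed_closure
  have hcont : Continuous fun v : H => InnerProductSpace.rankOne ℂ v v :=
    (ContinuousLinearMap.smulRightL ℂ H H).continuous₂.comp
      ((innerSL ℂ (E := H)).continuous.prodMk continuous_id)
  have htb : TotallyBounded (closure (convexHull ℝ ((fun v : H =>
      InnerProductSpace.rankOne ℂ v v) ''
      closure (range fun n : ℕ => U^[n] f)))) :=
    ((hcompact.image hcont).totallyBounded.convexHull).closure
  have hc := htb.isCompact_of_isClosed isClosed_closure
  obtain ⟨S, -, φ, hφ, hlim⟩ := hc.tendsto_subseq (x := averagedRankOne U f) (by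
    intro n
    refine subset_closure ((convex_convexHull ℝ _).sum_mem (fun i _ => by positivity) ?_ ?_)
    · simp
      field_simp
    · intro i _
      exact subset_convexHull ℝ _ ⟨_, subset_closure ⟨i, rfl⟩, rfl⟩)
  exact ⟨S, φ, hφ, hlim⟩

lemma averagedRankOne_comp_sub (U : H →ₗᵢ[ℂ] H) (f : H) (n : ℕ) :
    averagedRankOne U f n ∘L U.toContinuousLinearMap
        - U.toContinuousLinearMap ∘L averagedRankOne U f n =
      ((n + 1 : ℝ)⁻¹) • ((InnerProductSpace.rankOne ℂ f f
        - InnerProductSpace.rankOne ℂ (U^[n + 1] f) (U^[n + 1] f)) ∘L U.toContinuousLinearMap) := by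
  ext h
  have key : ∀ i, U (InnerProductSpace.rankOne ℂ (U^[i] f) (U^[i] f) h) =
      InnerProductSpace.rankOne ℂ (U^[i + 1] f) (U^[i + 1] f) (U h) := by
    intro i
    simp [Function.iterate_succ_apply', U.inner_map_map]
  have := Finset.sum_range_sub'
    (fun i => InnerProductSpace.rankOne ℂ (U^[i] f) (U^[i] f) (U h)) (n + 1)
  simp only [averagedRankOne, sub_apply, ContinuousLinearMap.comp_apply,
    sum_apply, smul_apply,
    LinearIsometry.coe_toContinuousLinearMap, ← Finset.smul_sum]
  have hs : ∀ v : H, U (((n + 1 : ℝ)⁻¹) • v) = ((n + 1 : ℝ)⁻¹) • U v := fun v =>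
    LinearMap.map_smul_of_tower U.toLinearMap _ v
  rw [hs, ← smul_sub, map_sum, Finset.sum_congr rfl fun i _ => key i,
    ← Finset.sum_sub_distrib, this]
  rfl

lemma tendsto_averagedRankOne_comp_sub (U : H →ₗᵢ[ℂ] H) (f : H) :
    Tendsto (fun n => averagedRankOne U f n ∘L U.toContinuousLinearMap
        - U.toContinuousLinearMap ∘L averagedRankOne U f n) atTop (nhds 0) := by
  have h0 : Tendsto (fun n : ℕ => ((n : ℝ) + 1)⁻¹ * (2 * ‖f‖ ^ 2)) atTop (nhds 0) := by
    simpa [one_div] using (tendsto_one_div_add_atTop_nhds_zero_nat (𝕜 := ℝ)).mul_const (2 * ‖f‖ ^ 2)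
  refine squeeze_zero_norm (fun n => ?_) h0
  rw [averagedRankOne_comp_sub, norm_smul, Real.norm_of_nonneg (by positivity)]
  gcongr
  refine (ContinuousLinearMap.opNorm_comp_le _ _).trans ?_
  calc _ ≤ (‖f‖ * ‖f‖ + ‖f‖ * ‖f‖) * 1 := by
        gcongr
        · refine (norm_sub_le _ _).trans ?_
          rw [InnerProductSpace.norm_rankOne, InnerProductSpace.norm_rankOne,
            norm_iterate_linearIsometry]
        · exact U.norm_toContinuousLinearMap_le
    _ = _ := by ring

lemma inner_averagedRankOne (U : H →ₗᵢ[ℂ] H) (f : H) (n : ℕ) (v : H) :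
    inner ℂ v (averagedRankOne U f n v) =
      ((∑ i ∈ Finset.range (n + 1), ((n + 1 : ℝ)⁻¹) * ‖inner ℂ v (U^[i] f)‖ ^ 2 : ℝ) : ℂ) := by
  rw [averagedRankOne, sum_apply, inner_sum]
  push_cast
  refine Finset.sum_congr rfl fun i _ => ?_
  rw [Pi.smul_apply, InnerProductSpace.rankOne_apply, ← Complex.coe_smul,
    inner_smul_right, inner_smul_right, ← inner_conj_symm (U^[i] f) v, Complex.conj_mul']
  simp

lemma averagedRankOne_isSymmetric (U : H →ₗᵢ[ℂ] H) (f : H) (n : ℕ) (x y : H) :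
    inner ℂ (averagedRankOne U f n x) y = inner ℂ x (averagedRankOne U f n y) := by
  simp only [averagedRankOne, sum_apply, inner_sum, sum_inner]
  refine Finset.sum_congr rfl fun i _ => ?_
  rw [smul_apply, InnerProductSpace.rankOne_apply, ← Complex.coe_smul,
    smul_apply, InnerProductSpace.rankOne_apply, ← Complex.coe_smul,
    inner_smul_right, inner_smul_right, inner_smul_left, inner_smul_left, inner_conj_symm]
  simp only [Complex.conj_ofReal]
  ring

lemma averagedRankOne_isCompactOperator (U : H →ₗᵢ[ℂ] H) (f : H) (n : ℕ) :
    IsCompactOperator (averagedRankOne U f n) := by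
  have : averagedRankOne U f n ∈ compactOperator (RingHom.id ℂ) H H := by
    refine Submodule.sum_mem _ fun i _ => ?_
    rw [← Complex.coe_smul]
    refine Submodule.smul_mem _ _ ?_
    show IsCompactOperator _
    rw [InnerProductSpace.rankOne_def']
    exact IsCompactOperator.comp_clm (f := ContinuousLinearMap.toSpanSingleton ℂ (U^[i] f))
      (isCompactOperator_of_locallyCompactSpace_rng _) (innerSL ℂ (U^[i] f))
  exact this

/-- A lower bound for quadratic forms of the averaged operators at the centres of a finite cover
of the orbit. -/
lemma le_sum_inner_averagedRankOne (U : H →ₗᵢ[ℂ] H) (f : H) (t : Finset H)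
    (ht : ∀ i : ℕ, ∃ v ∈ t, ‖U^[i] f - v‖ ≤ ‖f‖ / 2) (n : ℕ) :
    (‖f‖ ^ 2 / 2) ^ 2 ≤ ∑ v ∈ t, (inner ℂ v (averagedRankOne U f n v)).re := by
  simp_rw [inner_averagedRankOne, Complex.ofReal_re]
  rw [Finset.sum_comm]
  have hn : (0 : ℝ) < (n : ℝ) + 1 := by positivity
  calc (‖f‖ ^ 2 / 2) ^ 2 = ∑ i ∈ Finset.range (n + 1), ((n + 1 : ℝ)⁻¹) * (‖f‖ ^ 2 / 2) ^ 2 := by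
        simp; field_simp
    _ ≤ _ := by
        refine Finset.sum_le_sum fun i _ => ?_
        rw [← Finset.mul_sum]
        gcongr
        obtain ⟨v, hv, hd⟩ := ht i
        refine le_trans ?_ (Finset.single_le_sum (f := fun v => ‖inner ℂ v (U^[i] f)‖ ^ 2)
          (fun _ _ => by positivity) hv)
        gcongr
        have h1 : inner ℂ v (U^[i] f) =
            inner ℂ (U^[i] f) (U^[i] f) - inner ℂ (U^[i] f - v) (U^[i] f) := by
          rw [inner_sub_left]; ring
        have h2 : ‖inner ℂ (U^[i] f - v) (U^[i] f)‖ ≤ ‖f‖ / 2 * ‖f‖ := by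
          refine (norm_inner_le_norm _ _).trans ?_
          rw [norm_iterate_linearIsometry]
          gcongr
        have h3 : ‖inner ℂ (U^[i] f) (U^[i] f)‖ = ‖f‖ ^ 2 := by
          rw [inner_self_eq_norm_sq_to_K, norm_iterate_linearIsometry]; simp
        have h4 := norm_sub_norm_le (inner ℂ (U^[i] f) (U^[i] f)) (inner ℂ (U^[i] f - v) (U^[i] f))
        rw [h1]
        nlinarith

/-- A vector with totally bounded orbit that is orthogonal to all eigenvectors vanishes. -/
theorem eq_zero_of_totallyBounded_orbit [CompleteSpace H] (U : H →ₗᵢ[ℂ] H) {f : H}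
    (hf : TotallyBounded (range fun n : ℕ => U^[n] f))
    (horth : f ∈ (Submodule.span ℂ {g : H | ∃ c : ℂ, U g = c • g})ᗮ) : f = 0 := by
  set W := (Submodule.span ℂ {g : H | ∃ c : ℂ, U g = c • g})ᗮ with hW
  have hWU : ∀ g ∈ W, U g ∈ W := by
    intro g hg
    rw [hW, Submodule.mem_orthogonal] at hg ⊢
    intro e he
    induction he using Submodule.span_induction with
    | mem e he =>
      obtain ⟨c, hc⟩ := he
      rcases eq_or_ne c 0 with rfl | hc0
      · have : e = 0 := by
          rw [← norm_eq_zero, ← U.norm_map, hc]; simp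
        simp [this]
      · have h1 : inner ℂ (U e) (U g) = 0 := by
          rw [U.inner_map_map]; exact hg e (Submodule.subset_span ⟨c, hc⟩)
        rw [hc, inner_smul_left] at h1
        simpa [hc0] using h1
    | zero => simp
    | add x y _ _ hx hy => rw [inner_add_left, hx, hy, add_zero]
    | smul a x _ hx => rw [inner_smul_left, hx, mul_zero]
  have hWorb : ∀ i : ℕ, U^[i] f ∈ W := by
    intro i
    induction i with
    | zero => exact horth
    | succ k ih => rw [Function.iterate_succ_apply']; exact hWU _ ih
  obtain ⟨S, φ, hφ, hS⟩ := exists_tendsto_averagedRankOne U hf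
  have hSapply : ∀ x, Tendsto (fun n => averagedRankOne U f (φ n) x) atTop (nhds (S x)) :=
    fun x => ((ContinuousLinearMap.apply ℂ H x).continuous.tendsto S).comp hS
  have hScompact : IsCompactOperator S :=
    isCompactOperator_of_tendsto hS
      (Eventually.of_forall fun n => averagedRankOne_isCompactOperator U f _)
  have hSsymm : S.IsSymmetric := by
    intro x y
    refine tendsto_nhds_unique ((hSapply x).inner tendsto_const_nhds)
      ((tendsto_const_nhds.inner (hSapply y)).congr fun n => ?_)
    exact (averagedRankOne_isSymmetric U f _ x y).symm
  have hSW : ∀ x, S x ∈ W := by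
    intro x
    refine (Submodule.isClosed_orthogonal _).mem_of_tendsto (hSapply x)
      (Eventually.of_forall fun n => ?_)
    simp only [averagedRankOne, sum_apply]
    refine Submodule.sum_mem _ fun i _ => ?_
    rw [smul_apply, ← Complex.coe_smul]
    exact Submodule.smul_mem _ _ (Submodule.smul_mem _ _ (hWorb i))
  have hSU : ∀ x, S (U x) = U (S x) := by
    intro x
    have h1 : Tendsto (fun n => averagedRankOne U f (φ n) (U x) - U (averagedRankOne U f (φ n) x))
        atTop (nhds (S (U x) - U (S x))) :=
      (hSapply (U x)).sub ((U.continuous.tendsto _).comp (hSapply x))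
    have h2 := ((ContinuousLinearMap.apply ℂ H x).continuous.tendsto 0).comp
      ((tendsto_averagedRankOne_comp_sub U f).comp hφ.tendsto_atTop)
    have h3 := tendsto_nhds_unique h1 h2
    rw [map_zero] at h3
    exact sub_eq_zero.mp h3
  by_contra hne
  have hS0 : S ≠ 0 := by
    intro h0
    obtain ⟨t, ht, hcov⟩ := Metric.totallyBounded_iff.mp hf (‖f‖ / 2)
      (by have := norm_pos_iff.mpr hne; linarith)
    have hcov' : ∀ i : ℕ, ∃ v ∈ ht.toFinset, ‖U^[i] f - v‖ ≤ ‖f‖ / 2 := by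
      intro i
      have := hcov ⟨i, rfl⟩
      simp only [mem_iUnion, Metric.mem_ball, dist_eq_norm] at this
      obtain ⟨v, hv, hd⟩ := this
      exact ⟨v, by simpa using hv, hd.le⟩
    have hlim : Tendsto (fun n => ∑ v ∈ ht.toFinset, (inner ℂ v (averagedRankOne U f (φ n) v)).re)
        atTop (nhds (∑ v ∈ ht.toFinset, (inner ℂ v (S v)).re)) :=
      tendsto_finsetSum _ fun v _ =>
        (Complex.continuous_re.tendsto _).comp (tendsto_const_nhds.inner (hSapply v))
    have hle := ge_of_tendsto' hlim fun n => le_sum_inner_averagedRankOne U f _ hcov' (φ n)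
    have hpos : 0 < (‖f‖ ^ 2 / 2) ^ 2 := by
      have := norm_pos_iff.mpr hne
      positivity
    simp only [h0, zero_apply, inner_zero_right, Complex.zero_re,
      Finset.sum_const_zero] at hle
    linarith
  rw [Ne, ← ContinuousLinearMap.eq_zero_of_forall_hasEigenvalue_eq_zero hScompact hSsymm] at hS0
  push Not at hS0
  obtain ⟨ν, hν, hν0⟩ := hS0
  have := ContinuousLinearMap.finite_dimensional_eigenspace hScompact ν hν0
  set V := Module.End.eigenspace (S : Module.End ℂ H) ν with hV
  have hVU : ∀ x ∈ V, U.toLinearMap x ∈ V := by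
    intro x hx
    rw [hV, Module.End.mem_eigenspace_iff] at hx ⊢
    have hx' : S x = ν • x := hx
    show S (U x) = ν • U x
    rw [hSU, hx', map_smul]
  have : Nontrivial V := Submodule.nontrivial_iff_ne_bot.mpr hν
  obtain ⟨c, hc⟩ := Module.End.exists_eigenvalue (U.toLinearMap.restrict hVU)
  obtain ⟨v, hv⟩ := hc.exists_hasEigenvector
  have hv1 : U (v : H) = c • (v : H) := by
    have := hv.apply_eq_smul
    exact congrArg Subtype.val this
  have hv2 : (v : H) ∈ W := by
    have h1 : S (v : H) = ν • (v : H) := Module.End.mem_eigenspace_iff.mp v.2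
    have h2 : (v : H) = ν⁻¹ • S (v : H) := by rw [h1, smul_smul, inv_mul_cancel₀ hν0, one_smul]
    rw [h2]
    exact Submodule.smul_mem _ _ (hSW _)
  have h3 : inner ℂ (v : H) (v : H) = 0 :=
    (Submodule.mem_orthogonal _ _).mp hv2 _ (Submodule.subset_span ⟨c, hv1⟩)
  exact hv.2 (Subtype.ext (inner_self_eq_zero.mp h3))

end Hilbert

section Orbits

variable {H : Type*} [NormedAddCommGroup H] [InnerProductSpace ℂ H]

lemma dist_iterate_linearIsometry (U : H →ₗᵢ[ℂ] H) (f g : H) (i : ℕ) :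
    dist (U^[i] f) (U^[i] g) = dist f g := by
  induction i with
  | zero => rfl
  | succ k ih => rw [Function.iterate_succ_apply', Function.iterate_succ_apply', U.dist_map, ih]

/-- If arbitrarily long initial orbit segments have a cluster of proportional size, then the
orbit is totally bounded. -/
theorem totallyBounded_orbit_of_clusters (U : H →ₗᵢ[ℂ] H) (g : H)
    (h : ∀ η : ℝ, 0 < η → ∃ N : ℕ, ∀ n : ℕ, 1 ≤ n → ∃ B : Finset ℕ, B ⊆ Finset.range n ∧
      n ≤ N * B.card ∧ ∀ i ∈ B, ∀ j ∈ B, dist (U^[i] g) (U^[j] g) ≤ η) :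
    TotallyBounded (range fun n : ℕ => U^[n] g) := by
  classical
  rw [Metric.totallyBounded_iff]
  intro ε hε
  obtain ⟨N, hN⟩ := h (ε / 2) (by positivity)
  let Sep : Finset ℕ → Prop := fun t =>
    ∀ m ∈ t, ∀ m' ∈ t, m ≠ m' → ε / 2 < dist (U^[m] g) (U^[m'] g)
  have hcard : ∀ t, Sep t → t.card ≤ N := by
    intro t ht
    obtain ⟨M, hM⟩ : ∃ M, ∀ m ∈ t, m ≤ M := ⟨t.sup id, fun m hm => Finset.le_sup (f := id) hm⟩
    obtain ⟨B, hBn, hBN, hB⟩ := hN (N * M + 1) (by omega)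
    have hinj : InjOn (fun p : ℕ × ℕ => p.1 + p.2) (t ×ˢ B : Finset (ℕ × ℕ)) := by
      rintro ⟨m, i⟩ hp ⟨m', i'⟩ hp' heq
      simp only [Finset.coe_product, Set.mem_prod, Finset.mem_coe] at hp hp' heq
      by_cases hmm : m = m'
      · subst hmm
        have : i = i' := by omega
        rw [this]
      · exfalso
        have h1 := ht m hp.1 m' hp'.1 hmm
        rw [← dist_iterate_linearIsometry U _ _ i, ← Function.iterate_add_apply,
          ← Function.iterate_add_apply, show i + m = m' + i' by omega, add_comm i m',
          Function.iterate_add_apply, Function.iterate_add_apply,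
          dist_iterate_linearIsometry] at h1
        exact absurd (hB i' hp'.2 i hp.2) (not_le.mpr h1)
    have hle : (t ×ˢ B).card ≤ (Finset.range (N * M + 1 + M)).card := by
      refine Finset.card_le_card_of_injOn _ ?_ hinj
      rintro ⟨m, i⟩ hp
      simp only [Finset.coe_product, Set.mem_prod, Finset.mem_coe] at hp
      have h1 := hM m hp.1
      have h2 := Finset.mem_range.mp (hBn hp.2)
      simp only [Finset.coe_range, mem_Iio]
      omega
    rw [Finset.card_product, Finset.card_range] at hle
    by_contra! hlt
    nlinarith [Nat.mul_le_mul_left t.card hBN, Nat.mul_le_mul_left N hle,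
      Nat.mul_le_mul_right M hlt,
      Nat.mul_le_mul_right (N * M + 1) hlt]
  obtain ⟨t, ht, htcard⟩ := Nat.findGreatest_spec (P := fun s => ∃ t, Sep t ∧ t.card = s)
    (Nat.zero_le N) ⟨∅, by simp [Sep], rfl⟩
  have hmax : ∀ t', Sep t' → t'.card ≤ t.card := fun t' ht' => by
    rw [htcard]
    exact Nat.le_findGreatest (hcard t' ht') ⟨t', ht', rfl⟩
  refine ⟨(fun m : ℕ => U^[m] g) '' t, t.finite_toSet.image _, ?_⟩
  rintro _ ⟨k, rfl⟩
  simp only [mem_iUnion, Metric.mem_ball]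
  by_contra! hk
  have hk' : ∀ m ∈ t, ε ≤ dist (U^[k] g) (U^[m] g) := fun m hm => hk _ ⟨m, hm, rfl⟩
  have hkt : k ∉ t := fun hkt => by
    have := hk' k hkt
    rw [dist_self] at this
    linarith
  have := hmax (insert k t) (by
    intro m hm m' hm' hne
    rw [Finset.mem_insert] at hm hm'
    rcases hm with rfl | hm <;> rcases hm' with rfl | hm'
    · exact absurd rfl hne
    · linarith [hk' m' hm']
    · rw [dist_comm]; linarith [hk' m hm]
    · exact ht m hm m' hm' hne)
  rw [Finset.card_insert_of_notMem hkt] at this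
  omega

/-- The vectors whose orbit under `U` is totally bounded. -/
def almostPeriodicVectors (U : H →ₗᵢ[ℂ] H) : Submodule ℂ H where
  carrier := {f | TotallyBounded (range fun n : ℕ => U^[n] f)}
  zero_mem' := by
    refine (totallyBounded_singleton (0 : H)).subset ?_
    rintro _ ⟨n, rfl⟩
    exact iterate_map_zero U n
  add_mem' := by
    intro f g hf hg
    show TotallyBounded _
    rw [Metric.totallyBounded_iff]
    intro ε hε
    obtain ⟨s, hs, hscov⟩ := Metric.totallyBounded_iff.mp hf (ε / 2) (by positivity)
    obtain ⟨t, ht, htcov⟩ := Metric.totallyBounded_iff.mp hg (ε / 2) (by positivity)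
    refine ⟨image2 (· + ·) s t, hs.image2 _ ht, ?_⟩
    rintro _ ⟨n, rfl⟩
    have h1 := hscov ⟨n, rfl⟩
    have h2 := htcov ⟨n, rfl⟩
    simp only [mem_iUnion, Metric.mem_ball] at h1 h2 ⊢
    obtain ⟨x, hx, hdx⟩ := h1
    obtain ⟨y, hy, hdy⟩ := h2
    refine ⟨x + y, ⟨x, hx, y, hy, rfl⟩, ?_⟩
    rw [iterate_map_add]
    linarith [dist_add_add_le (U^[n] f) (U^[n] g) x y]
  smul_mem' := by
    intro c f hf
    refine (TotallyBounded.image hf (uniformContinuous_const_smul c)).subset ?_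
    rintro _ ⟨n, rfl⟩
    refine ⟨U^[n] f, ⟨n, rfl⟩, ?_⟩
    exact (Function.Semiconj.iterate_right (f := (c • · : H → H)) (fun x => (map_smul U c x).symm)
      n f)

lemma isClosed_almostPeriodicVectors (U : H →ₗᵢ[ℂ] H) :
    IsClosed (almostPeriodicVectors U : Set H) := by
  refine isClosed_of_closure_subset fun f hf => ?_
  show TotallyBounded _
  rw [Metric.totallyBounded_iff]
  intro ε hε
  obtain ⟨g, hg, hfg⟩ := Metric.mem_closure_iff.mp hf (ε / 2) (by positivity)
  obtain ⟨t, ht, hcov⟩ := Metric.totallyBounded_iff.mp hg (ε / 2) (by positivity)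
  refine ⟨t, ht, ?_⟩
  rintro _ ⟨n, rfl⟩
  have h1 := hcov ⟨n, rfl⟩
  simp only [mem_iUnion, Metric.mem_ball] at h1 ⊢
  obtain ⟨y, hy, hd⟩ := h1
  refine ⟨y, hy, ?_⟩
  have h2 := dist_iterate_linearIsometry U f g n
  linarith [dist_triangle (U^[n] f) (U^[n] g) y]

end Orbits

section Covers

variable {X : Type*} [MeasurableSpace X] {μ : Measure X}

lemma exists_isEpsCover_of_epsEntropy_le {C : ℝ≥0∞} (hC : C ≠ ∞) (ε : ℝ) :
    ∃ K : ℕ, ∀ ρ : X → X → ℝ, epsEntropy μ ρ ε ≤ C → ∃ k ≤ K, IsEpsCover μ ρ ε k := by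
  refine ⟨⌈(2 : ℝ) ^ ((C + 1).toReal)⌉₊, fun ρ hρ => ?_⟩
  have hlt : epsEntropy μ ρ ε < C + 1 := lt_of_le_of_lt hρ (ENNReal.lt_add_right hC one_ne_zero)
  obtain ⟨_, ⟨k, hk, rfl⟩, hklt⟩ := sInf_lt_iff.mp hlt
  refine ⟨k, ?_, hk⟩
  rcases Nat.eq_zero_or_pos k with rfl | hkpos
  · exact Nat.zero_le _
  have h1 : Real.logb 2 k ≤ (C + 1).toReal := by
    refine (ENNReal.ofReal_le_iff_le_toReal ?_).mp hklt.le
    exact ENNReal.add_ne_top.mpr ⟨hC, ENNReal.one_ne_top⟩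
  have h2 : (k : ℝ) ≤ 2 ^ ((C + 1).toReal) :=
    (Real.logb_le_iff_le_rpow (by norm_num) (by exact_mod_cast hkpos)).mp h1
  exact_mod_cast h2.trans (Nat.le_ceil _)

lemma IsEpsCover.epsEntropy_le {ρ : X → X → ℝ} {ε : ℝ} {k : ℕ} (h : IsEpsCover μ ρ ε k) :
    epsEntropy μ ρ ε ≤ ENNReal.ofReal (Real.logb 2 k) :=
  sInf_le ⟨k, h, rfl⟩

/-- A cover of `X` by small sets yields an approximation of the identity by a measurable map with
finitely many values. -/
lemma IsEpsCover.exists_retraction [Nonempty X] {ρ : X → X → ℝ} {ε : ℝ} {k : ℕ}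
    (h : IsEpsCover μ ρ ε k) :
    ∃ (J : X → ℕ) (c : ℕ → X) (Z : Set X), Measurable J ∧ (∀ x, J x < k + 1) ∧
      MeasurableSet Z ∧ μ Z < ENNReal.ofReal ε ∧ ∀ x ∉ Z, ρ x (c (J x)) < ε := by
  classical
  obtain ⟨A, hA, hcov, hA0, hdiam⟩ := h
  let B : ℕ → Set X := fun l => {x | ∃ h : l < k + 1, x ∈ A ⟨l, h⟩}
  have hB : ∀ x, ∃ l, x ∈ B l := by
    intro x
    obtain ⟨i, hi⟩ := mem_iUnion.mp (hcov ▸ mem_univ x)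
    exact ⟨i, i.2, hi⟩
  have hBm : ∀ l, MeasurableSet (B l) := by
    intro l
    by_cases hl : l < k + 1
    · have : B l = A ⟨l, hl⟩ := by ext x; exact ⟨fun h => h.2, fun h => ⟨hl, h⟩⟩
      rw [this]
      exact hA _
    · have : B l = ∅ := eq_empty_of_forall_notMem fun x h => hl h.1
      rw [this]
      exact MeasurableSet.empty
  refine ⟨fun x => Nat.find (hB x), fun l => if hl : (B l).Nonempty then hl.some else
    Classical.arbitrary X, A 0, measurable_find hB hBm, fun x => (Nat.find_spec (hB x)).1,
    hA 0, hA0, fun x hx => ?_⟩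
  obtain ⟨hlt, hmem⟩ := Nat.find_spec (hB x)
  have hne : (B (Nat.find (hB x))).Nonempty := ⟨x, Nat.find_spec (hB x)⟩
  dsimp only
  rw [dif_pos hne]
  obtain ⟨_, hmem'⟩ := hne.some_mem
  refine hdiam ⟨Nat.find (hB x), hlt⟩ ?_ x hmem _ hmem'
  intro h0
  rw [h0] at hmem
  exact hx hmem

end Covers

section Clusters

variable {X : Type*} [MeasurableSpace X] {μ : Measure X} [IsProbabilityMeasure μ]

lemma integrable_abs_sub_of_mem_unitInterval {f g : X → ℝ} (hf : Measurable f)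
    (hg : Measurable g) (hf0 : ∀ x, 0 ≤ f x) (hf1 : ∀ x, f x ≤ 1) (hg0 : ∀ x, 0 ≤ g x)
    (hg1 : ∀ x, g x ≤ 1) : Integrable (fun x => |f x - g x|) μ := by
  refine Integrable.of_bound (hf.sub hg).abs.aestronglyMeasurable 1
    (Eventually.of_forall fun x => ?_)
  rw [Real.norm_eq_abs, abs_abs, abs_le]
  constructor <;> linarith [hf0 x, hf1 x, hg0 x, hg1 x]

/-- Pigeonhole: a family of `n` functions with values in `[0, 1]` that is well approximated, on
average, by functions factoring through a fixed map with at most `k` values contains a large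
cluster in the `L¹` distance. -/
lemma exists_cluster (a : ℕ → X → ℝ) (ha : ∀ i, Measurable (a i)) (ha0 : ∀ i x, 0 ≤ a i x)
    (ha1 : ∀ i x, a i x ≤ 1) {J : X → ℕ} {c : ℕ → X} (hJ : Measurable J) {k M : ℕ} (hM : 0 < M)
    (hJk : ∀ x, J x < k) {δ : ℝ} (hδ : 0 < δ) (n : ℕ)
    (hsum : ∑ i ∈ Finset.range n, ∫ x, |a i x - a i (c (J x))| ∂μ ≤ n * δ) :
    ∃ B : Finset ℕ, B ⊆ Finset.range n ∧ n ≤ 2 * Fintype.card (Fin k → Fin (M + 1)) * B.card ∧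
      ∀ i ∈ B, ∀ j ∈ B, ∫ x, |a i x - a j x| ∂μ ≤ 4 * δ + (M : ℝ)⁻¹ := by
  classical
  have hac : ∀ i, Measurable fun x => a i (c (J x)) := fun i =>
    (measurable_from_nat (f := fun l => a i (c l))).comp hJ
  set e : ℕ → ℝ := fun i => ∫ x, |a i x - a i (c (J x))| ∂μ with he
  have he0 : ∀ i, 0 ≤ e i := fun i => integral_nonneg fun x => abs_nonneg _
  set G := (Finset.range n).filter fun i => e i ≤ 2 * δ with hG
  have hGcard : n ≤ 2 * G.card := by
    have h1 : ((Finset.range n).filter fun i => ¬ e i ≤ 2 * δ).card * (2 * δ) ≤ n * δ := by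
      refine le_trans ?_ hsum
      rw [← nsmul_eq_mul]
      refine le_trans (Finset.card_nsmul_le_sum _ e _ fun i hi => ?_)
        (Finset.sum_le_sum_of_subset_of_nonneg (Finset.filter_subset _ _) fun i _ _ => he0 i)
      exact (not_le.mp (Finset.mem_filter.mp hi).2).le
    have h2 := Finset.card_filter_add_card_filter_not (s := Finset.range n) (fun i => e i ≤ 2 * δ)
    rw [Finset.card_range] at h2
    have h3 : 2 * ((Finset.range n).filter fun i => ¬ e i ≤ 2 * δ).card ≤ n := by
      have : (2 * ((Finset.range n).filter fun i => ¬ e i ≤ 2 * δ).card : ℝ) ≤ n := by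
        by_contra hlt
        rw [not_le] at hlt
        nlinarith [mul_lt_mul_of_pos_right hlt hδ]
      exact_mod_cast this
    rw [← hG] at h2
    omega
  have hMpos : (0 : ℝ) < M := by exact_mod_cast hM
  let q : ℕ → Fin k → Fin (M + 1) := fun i l => ⟨⌊M * a i (c l)⌋₊, by
    rw [Nat.lt_succ_iff]
    refine Nat.floor_le_of_le ?_
    nlinarith [ha1 i (c l)]⟩
  obtain ⟨y, -, hy⟩ := Finset.exists_max_image Finset.univ
    (fun y => (G.filter fun i => q i = y).card) ⟨q 0, Finset.mem_univ _⟩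
  refine ⟨G.filter fun i => q i = y, (Finset.filter_subset _ _).trans (Finset.filter_subset _ _),
    ?_, ?_⟩
  · have h1 : G.card ≤ Fintype.card (Fin k → Fin (M + 1)) * (G.filter fun i => q i = y).card := by
      rw [Finset.card_eq_sum_card_fiberwise (f := q) (t := Finset.univ) (fun _ _ => by simp)]
      refine (Finset.sum_le_card_nsmul _ _ _ fun z hz => hy z hz).trans ?_
      simp
    nlinarith
  · intro i hi j hj
    simp only [Finset.mem_filter, hG] at hi hj
    have hpt : ∀ x, |a i x - a j x| ≤
        |a i x - a i (c (J x))| + |a j x - a j (c (J x))| + (M : ℝ)⁻¹ := by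
      intro x
      have hq : q i ⟨J x, hJk x⟩ = q j ⟨J x, hJk x⟩ := by rw [hi.2, hj.2]
      have hq' : ⌊M * a i (c (J x))⌋₊ = ⌊M * a j (c (J x))⌋₊ := congrArg Fin.val hq
      have hi1 := Nat.floor_le (mul_nonneg hMpos.le (ha0 i (c (J x))))
      have hi2 := Nat.lt_floor_add_one (M * a i (c (J x)))
      have hj1 := Nat.floor_le (mul_nonneg hMpos.le (ha0 j (c (J x))))
      have hj2 := Nat.lt_floor_add_one (M * a j (c (J x)))
      rw [hq'] at hi1 hi2
      have hclose : |a i (c (J x)) - a j (c (J x))| ≤ (M : ℝ)⁻¹ := by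
        have habs : |a i (c (J x)) - a j (c (J x))| * M =
            |(a i (c (J x)) - a j (c (J x))) * M| := by
          rw [abs_mul, abs_of_pos hMpos]
        rw [← one_div, le_div_iff₀ hMpos, habs, abs_le]
        constructor <;> nlinarith
      rw [abs_sub_comm (a j x)]
      calc |a i x - a j x| = |(a i x - a i (c (J x))) + (a j (c (J x)) - a j x) +
            (a i (c (J x)) - a j (c (J x)))| := by ring_nf
        _ ≤ _ := (abs_add_three _ _ _).trans (by gcongr)
    have hI := fun i => integrable_abs_sub_of_mem_unitInterval (μ := μ) (ha i) (hac i) (ha0 i)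
      (ha1 i) (fun _ => ha0 i _) (fun _ => ha1 i _)
    calc ∫ x, |a i x - a j x| ∂μ
        ≤ ∫ x, (|a i x - a i (c (J x))| + |a j x - a j (c (J x))| + (M : ℝ)⁻¹) ∂μ :=
          integral_mono (integrable_abs_sub_of_mem_unitInterval (ha i) (ha j) (ha0 i) (ha1 i)
            (ha0 j) (ha1 j))
            (((hI i).add (hI j)).add (integrable_const _)) hpt
      _ = e i + e j + (M : ℝ)⁻¹ := by
          have e1 := integral_add ((hI i).add (hI j)) (integrable_const (M : ℝ)⁻¹)
          simp only [Pi.add_apply] at e1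
          rw [e1, integral_add (hI i) (hI j)]
          simp [he]
      _ ≤ _ := by linarith [hi.1.2, hj.1.2]

end Clusters

section Koopman

variable {X : Type*} [MeasurableSpace X] {μ : Measure X} [IsProbabilityMeasure μ]

lemma memLp_ofReal_of_mem_unitInterval {g : X → ℝ} (hg : Measurable g) (h0 : ∀ x, 0 ≤ g x)
    (h1 : ∀ x, g x ≤ 1) : MemLp (fun x => (g x : ℂ)) 2 μ := by
  refine MemLp.of_bound (Complex.measurable_ofReal.comp hg).aestronglyMeasurable 1
    (Eventually.of_forall fun x => ?_)
  rw [Complex.norm_real, Real.norm_eq_abs, abs_of_nonneg (h0 x)]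
  exact h1 x

lemma dist_toLp_sq_le {f g : X → ℝ} (hf : Measurable f) (hg : Measurable g)
    (hf0 : ∀ x, 0 ≤ f x) (hf1 : ∀ x, f x ≤ 1) (hg0 : ∀ x, 0 ≤ g x) (hg1 : ∀ x, g x ≤ 1) :
    dist ((memLp_ofReal_of_mem_unitInterval (μ := μ) hf hf0 hf1).toLp _)
      ((memLp_ofReal_of_mem_unitInterval hg hg0 hg1).toLp _) ^ 2 ≤ ∫ x, |f x - g x| ∂μ := by
  have hm := (memLp_ofReal_of_mem_unitInterval (μ := μ) hf hf0 hf1).sub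
    (memLp_ofReal_of_mem_unitInterval hg hg0 hg1)
  rw [dist_eq_norm, ← MemLp.toLp_sub, Lp.norm_toLp,
    hm.eLpNorm_eq_integral_rpow_norm two_ne_zero ENNReal.ofNat_ne_top,
    ENNReal.toReal_ofReal (by positivity)]
  have h2 : (ENNReal.toReal 2) = 2 := by simp
  have hnn : 0 ≤ ∫ x, ‖((fun x => (f x : ℂ)) - fun x => (g x : ℂ)) x‖ ^ (2 : ℝ) ∂μ :=
    integral_nonneg fun x => by positivity
  rw [h2, ← Real.rpow_natCast, ← Real.rpow_mul hnn]
  norm_num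
  refine integral_mono_of_nonneg (Eventually.of_forall fun x => by positivity)
    (integrable_abs_sub_of_mem_unitInterval hf hg hf0 hf1 hg0 hg1)
    (Eventually.of_forall fun x => ?_)
  dsimp only
  rw [← Complex.ofReal_sub, Complex.norm_real, Real.norm_eq_abs]
  have hle : |f x - g x| ≤ 1 := by
    rw [abs_le]
    constructor <;> linarith [hf0 x, hf1 x, hg0 x, hg1 x]
  nlinarith [abs_nonneg (f x - g x)]

variable {T : X → X}

lemma iterate_compMeasurePreserving_toLp (hT : MeasurePreserving T μ μ) {g : X → ℝ}
    (hg : Measurable g) (h0 : ∀ x, 0 ≤ g x) (h1 : ∀ x, g x ≤ 1) (i : ℕ) :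
    (Lp.compMeasurePreservingₗᵢ ℂ T hT)^[i]
        ((memLp_ofReal_of_mem_unitInterval hg h0 h1).toLp _) =
      (memLp_ofReal_of_mem_unitInterval (μ := μ) (g := fun x => g (T^[i] x))
        (hg.comp (hT.iterate i).measurable) (fun _ => h0 _) fun _ => h1 _).toLp _ := by
  induction i with
  | zero => rfl
  | succ i ih =>
    rw [Function.iterate_succ_apply', ih]
    refine Eq.trans (Lp.toLp_compMeasurePreserving _ hT) ?_
    congr 1

/-- A bounded function which is Lipschitz with respect to a semimetric whose averages have bounded
entropies is almost periodic. -/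
lemma mem_almostPeriodicVectors_of_lipschitz (hT : MeasurePreserving T μ μ) {ρ : X → X → ℝ}
    (hent : ∀ ε : ℝ, 0 < ε → ∃ C : ℝ≥0∞, C ≠ ∞ ∧ ∀ n : ℕ, 1 ≤ n →
      epsEntropy μ (fun x y => (∑ k ∈ Finset.range n, ρ (T^[k] x) (T^[k] y)) / n) ε ≤ C)
    {g : X → ℝ} (hg : Measurable g) (h0 : ∀ x, 0 ≤ g x) (h1 : ∀ x, g x ≤ 1) {L : ℝ} (hL : 0 ≤ L)
    (hlip : ∀ x y, |g x - g y| ≤ L * ρ x y) :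
    (memLp_ofReal_of_mem_unitInterval (μ := μ) hg h0 h1).toLp _ ∈
      almostPeriodicVectors (Lp.compMeasurePreservingₗᵢ ℂ T hT : Lp ℂ 2 μ →ₗᵢ[ℂ] Lp ℂ 2 μ) := by
  have : Nonempty X := nonempty_of_isProbabilityMeasure μ
  refine totallyBounded_orbit_of_clusters _ _ fun η hη => ?_
  obtain ⟨M, hM⟩ := exists_nat_gt (2 / η ^ 2)
  have hη2 : 0 < η ^ 2 := by positivity
  have hMpos : (0 : ℝ) < M := lt_trans (by positivity) hM
  have hMinv : (M : ℝ)⁻¹ ≤ η ^ 2 / 2 := by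
    rw [inv_le_comm₀ hMpos (by positivity), inv_div]
    exact hM.le
  set ε := η ^ 2 / (8 * (L + 1)) with hε
  have hεpos : 0 < ε := by positivity
  have hδ : 4 * ((L + 1) * ε) = η ^ 2 / 2 := by
    rw [hε]
    field_simp
    norm_num
  obtain ⟨C, hC, hCle⟩ := hent ε hεpos
  obtain ⟨K, hK⟩ := exists_isEpsCover_of_epsEntropy_le (μ := μ) hC ε
  refine ⟨2 * Fintype.card (Fin (K + 1) → Fin (M + 1)), fun n hn => ?_⟩
  obtain ⟨k, hkK, hk⟩ := hK _ (hCle n hn)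
  obtain ⟨J, c, Z, hJ, hJk, hZ, hμZ, hJc⟩ := hk.exists_retraction
  have hm : ∀ i, Measurable fun x => g (T^[i] x) := fun i => hg.comp (hT.iterate i).measurable
  have hnpos : (0 : ℝ) < n := by exact_mod_cast hn
  have hsum : ∑ i ∈ Finset.range n, ∫ x, |g (T^[i] x) - g (T^[i] (c (J x)))| ∂μ ≤
      n * ((L + 1) * ε) := by
    have hI : ∀ i, Integrable (fun x => |g (T^[i] x) - g (T^[i] (c (J x)))|) μ := fun i =>
      integrable_abs_sub_of_mem_unitInterval (hm i)
        ((measurable_from_nat (f := fun l => g (T^[i] (c l)))).comp hJ) (fun _ => h0 _)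
        (fun _ => h1 _) (fun _ => h0 _) (fun _ => h1 _)
    rw [← integral_finsetSum _ fun i _ => hI i]
    have hZI : Integrable (fun x => Z.indicator (fun _ => (n : ℝ)) x) μ :=
      (integrable_const _).indicator hZ
    have hpt : ∀ x, ∑ i ∈ Finset.range n, |g (T^[i] x) - g (T^[i] (c (J x)))| ≤
        n * (L * ε) + Z.indicator (fun _ => (n : ℝ)) x := by
      intro x
      by_cases hx : x ∈ Z
      · rw [indicator_of_mem hx]
        have : ∑ i ∈ Finset.range n, |g (T^[i] x) - g (T^[i] (c (J x)))| ≤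
            ∑ i ∈ Finset.range n, 1 := by
          refine Finset.sum_le_sum fun i _ => ?_
          rw [abs_le]
          constructor <;> linarith [h0 (T^[i] x), h1 (T^[i] x), h0 (T^[i] (c (J x))),
            h1 (T^[i] (c (J x)))]
        simp only [Finset.sum_const, Finset.card_range, nsmul_eq_mul, mul_one] at this
        have h2 : 0 ≤ n * (L * ε) := by positivity
        linarith
      · rw [indicator_of_notMem hx, add_zero]
        have h2 := hJc x hx
        rw [div_lt_iff₀ hnpos] at h2
        calc ∑ i ∈ Finset.range n, |g (T^[i] x) - g (T^[i] (c (J x)))|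
            ≤ ∑ i ∈ Finset.range n, L * ρ (T^[i] x) (T^[i] (c (J x))) :=
              Finset.sum_le_sum fun i _ => hlip _ _
          _ = L * ∑ i ∈ Finset.range n, ρ (T^[i] x) (T^[i] (c (J x))) := by
              rw [Finset.mul_sum]
          _ ≤ L * (ε * n) := by gcongr
          _ = n * (L * ε) := by ring
    refine (integral_mono (integrable_finsetSum _ fun i _ => hI i)
      ((integrable_const _).add hZI) hpt).trans ?_
    have e1 := integral_add (integrable_const ((n : ℝ) * (L * ε))) hZI
    have hZr : μ.real Z ≤ ε := ENNReal.toReal_le_of_le_ofReal hεpos.le hμZ.le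
    simp only [Pi.add_apply]
    rw [e1, integral_const, integral_indicator hZ]
    simp only [probReal_univ, smul_eq_mul, one_mul, integral_const, MeasurableSet.univ,
      measureReal_restrict_apply, univ_inter]
    nlinarith
  obtain ⟨B, hBn, hBcard, hB⟩ := exists_cluster (fun i x => g (T^[i] x)) hm (fun _ _ => h0 _)
    (fun _ _ => h1 _) hJ (by exact_mod_cast hMpos)
    (fun x => lt_of_lt_of_le (hJk x) (Nat.succ_le_succ hkK)) (δ := (L + 1) * ε) (by positivity)
    n hsum
  refine ⟨B, hBn, hBcard, fun i hi j hj => ?_⟩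
  rw [iterate_compMeasurePreserving_toLp hT hg h0 h1,
    iterate_compMeasurePreserving_toLp hT hg h0 h1]
  refine abs_le_of_sq_le_sq' ?_ hη.le |>.2
  refine (dist_toLp_sq_le (hm i) (hm j) (fun _ => h0 _) (fun _ => h1 _)
    (fun _ => h0 _) fun _ => h1 _).trans ((hB i hi j hj).trans ?_)
  linarith

end Koopman

section AlmostPeriodic

variable {X : Type*} [MeasurableSpace X] {μ : Measure X} {T : X → X}

/-- The function `g` is square integrable, and its class in `L²` has a totally bounded orbit under
the Koopman operator. -/
def IsAlmostPeriodic (hT : MeasurePreserving T μ μ) (g : X → ℝ) : Prop :=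
  ∃ hg : MemLp (fun x => (g x : ℂ)) 2 μ, hg.toLp _ ∈
    almostPeriodicVectors (Lp.compMeasurePreservingₗᵢ ℂ T hT : Lp ℂ 2 μ →ₗᵢ[ℂ] Lp ℂ 2 μ)

variable {hT : MeasurePreserving T μ μ}

lemma IsAlmostPeriodic.congr_ae {f g : X → ℝ} (hf : IsAlmostPeriodic hT f) (h : f =ᵐ[μ] g) :
    IsAlmostPeriodic hT g := by
  obtain ⟨hf, hf'⟩ := hf
  have h' : (fun x => (f x : ℂ)) =ᵐ[μ] fun x => (g x : ℂ) := h.fun_comp Complex.ofReal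
  refine ⟨hf.ae_eq h', ?_⟩
  rwa [← MemLp.toLp_congr hf (hf.ae_eq h') h']

lemma IsAlmostPeriodic.sub {f g : X → ℝ} (hf : IsAlmostPeriodic hT f)
    (hg : IsAlmostPeriodic hT g) : IsAlmostPeriodic hT fun x => f x - g x := by
  obtain ⟨hf, hf'⟩ := hf
  obtain ⟨hg, hg'⟩ := hg
  have h : (fun x => ((f x - g x : ℝ) : ℂ)) = (fun x => (f x : ℂ)) - fun x => (g x : ℂ) := by
    ext x
    simp
  unfold IsAlmostPeriodic
  simp only [h]
  exact ⟨hf.sub hg, Submodule.sub_mem _ hf' hg'⟩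

lemma IsAlmostPeriodic.add {f g : X → ℝ} (hf : IsAlmostPeriodic hT f)
    (hg : IsAlmostPeriodic hT g) : IsAlmostPeriodic hT fun x => f x + g x := by
  obtain ⟨hf, hf'⟩ := hf
  obtain ⟨hg, hg'⟩ := hg
  have h : (fun x => ((f x + g x : ℝ) : ℂ)) = (fun x => (f x : ℂ)) + fun x => (g x : ℂ) := by
    ext x
    simp
  unfold IsAlmostPeriodic
  simp only [h]
  exact ⟨hf.add hg, Submodule.add_mem _ hf' hg'⟩

lemma almostPeriodicVectors_eq_top_of_indicator
    (h : ∀ s : Set X, MeasurableSet s → IsAlmostPeriodic hT (s.indicator fun _ => 1)) :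
    almostPeriodicVectors (Lp.compMeasurePreservingₗᵢ ℂ T hT : Lp ℂ 2 μ →ₗᵢ[ℂ] Lp ℂ 2 μ) = ⊤ := by
  refine Submodule.eq_top_iff'.mpr fun f => ?_
  refine Lp.induction ENNReal.ofNat_ne_top
    (motive := fun f => f ∈ almostPeriodicVectors
      (Lp.compMeasurePreservingₗᵢ ℂ T hT : Lp ℂ 2 μ →ₗᵢ[ℂ] Lp ℂ 2 μ))
    (fun c s hs hμs => ?_) (fun f g _ _ _ hf hg => Submodule.add_mem _ hf hg)
    (isClosed_almostPeriodicVectors _) f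
  obtain ⟨hm, hmem⟩ := h s hs
  rw [Lp.simpleFunc.coe_indicatorConst]
  convert Submodule.smul_mem _ c hmem using 1
  rw [← MemLp.toLp_const_smul, indicatorConstLp]
  congr 1
  ext x
  by_cases hx : x ∈ s <;> simp [hx]

/-- The sets of positivity of the functions that are `1`-Lipschitz for the semimetric `ρ`. -/
def lipschitzPosSets (ρ : X → X → ℝ) : Set (Set X) :=
  {s | ∃ u : X → ℝ, Measurable u ∧ (∀ x y, |u x - u y| ≤ ρ x y) ∧ s = {x | 0 < u x}}

lemma isPiSystem_lipschitzPosSets (ρ : X → X → ℝ) : IsPiSystem (lipschitzPosSets ρ) := by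
  rintro _ ⟨u, hu, hul, rfl⟩ _ ⟨v, hv, hvl, rfl⟩ -
  refine ⟨fun x => min (u x) (v x), hu.min hv, fun x y => ?_, ?_⟩
  · exact (abs_min_sub_min_le_max _ _ _ _).trans (max_le (hul x y) (hvl x y))
  · ext x
    simp

lemma generateFrom_lipschitzPosSets_le (ρ : X → X → ℝ) :
    MeasurableSpace.generateFrom (lipschitzPosSets ρ) ≤ ‹MeasurableSpace X› := by
  refine MeasurableSpace.generateFrom_le ?_
  rintro _ ⟨u, hu, -, rfl⟩
  exact measurableSet_lt measurable_const hu

/-- For a metric which is separable on a set of full measure, the sets of positivity of Lipschitz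
functions generate all measurable sets up to null sets. -/
lemma exists_ae_eq_generateFrom_lipschitzPosSets [StandardBorelSpace X] {ρ : X → X → ℝ}
    (hρ : IsMetricFun ρ) (hadm : Admissible μ ρ) {s : Set X} (hs : MeasurableSet s) :
    ∃ t, MeasurableSet[MeasurableSpace.generateFrom (lipschitzPosSets ρ)] t ∧ t =ᵐ[μ] s := by
  obtain ⟨⟨hnn, -, hsymm, htri⟩, hsep⟩ := hρ
  obtain ⟨hm, S, hS, hμS, D, -, hDc, hD⟩ := hadm
  have : Countable D := hDc.to_subtype
  let Φ : X → D → ℝ := fun x d => ρ d x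
  have hcoord : ∀ d, Measurable fun x => ρ d x := fun d => hm.of_uncurry_left
  have hΦ : Measurable Φ := measurable_pi_iff.mpr fun d => hcoord d
  have hΦ' : Measurable[MeasurableSpace.generateFrom (lipschitzPosSets ρ)] Φ := by
    refine @measurable_pi_lambda _ _ _ (_) _ _ fun d => ?_
    refine @measurable_of_Ioi _ _ _ _ _ (_) _ _ _ _ fun t => ?_
    refine MeasurableSpace.measurableSet_generateFrom
      ⟨fun x => ρ d x - t, (hcoord d).sub_const t, fun x y => ?_, ?_⟩
    · rw [abs_le]
      have h1 := htri d x y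
      have h2 := htri d y x
      rw [hsymm y x] at h2
      constructor <;> linarith
    · ext x
      simp [Φ]
  have hinj : InjOn Φ S := by
    intro x hx y hy hxy
    refine (hsep x y).mp (le_antisymm (le_of_forall_pos_lt_add fun ε hε => ?_) (hnn x y))
    obtain ⟨d, hdD, hd⟩ := hD x hx (ε / 2) (by positivity)
    have h1 : ρ d x = ρ d y := congrFun hxy ⟨d, hdD⟩
    have h2 := htri x d y
    rw [← h1, hsymm d x] at h2
    linarith
  refine ⟨Φ ⁻¹' (Φ '' (s ∩ S)), hΦ' ((hs.inter hS).image_of_measurable_injOn hΦ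
    (hinj.mono inter_subset_right)), ?_⟩
  filter_upwards [mem_ae_iff.mpr hμS] with x hx
  refine propext ⟨?_, fun h => ⟨x, ⟨h, hx⟩, rfl⟩⟩
  rintro ⟨y, ⟨hys, hyS⟩, hyx⟩
  have : y = x := hinj hyS hx hyx
  exact this ▸ hys

lemma setOf_eigenfunction_eq (hT : MeasurePreserving T μ μ) :
    {f : Lp ℂ 2 μ | ∃ c : ℂ, ∀ᵐ x ∂μ, f (T x) = c * f x} =
      {f : Lp ℂ 2 μ | ∃ c : ℂ, Lp.compMeasurePreservingₗᵢ ℂ T hT f = c • f} := by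
  ext f
  refine exists_congr fun c => ?_
  rw [Lp.ext_iff]
  have h1 : (Lp.compMeasurePreservingₗᵢ ℂ T hT f : X → ℂ) =ᵐ[μ] f ∘ T :=
    Lp.coeFn_compMeasurePreserving f hT
  have h2 := Lp.coeFn_smul c f
  constructor
  · intro h
    filter_upwards [h, h1, h2] with x hx hx1 hx2
    rw [hx1, hx2]
    exact hx
  · intro h
    filter_upwards [h, h1, h2] with x hx hx1 hx2
    rw [hx1, hx2] at hx
    exact hx

variable [IsProbabilityMeasure μ]

lemma isAlmostPeriodic_const (c : ℝ) : IsAlmostPeriodic hT fun _ => c := by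
  refine ⟨memLp_const _, ?_⟩
  have h : ∀ n : ℕ, (Lp.compMeasurePreservingₗᵢ ℂ T hT : Lp ℂ 2 μ →ₗᵢ[ℂ] Lp ℂ 2 μ)^[n]
      ((memLp_const (c : ℂ)).toLp _) = (memLp_const (c : ℂ)).toLp _ := fun n =>
    Function.iterate_fixed (Lp.toLp_compMeasurePreserving (memLp_const (c : ℂ)) hT) n
  change TotallyBounded _
  simp only [h]
  exact (Set.finite_range_const).totallyBounded

lemma isAlmostPeriodic_of_tendsto {F : ℕ → X → ℝ} {g : X → ℝ} (hF : ∀ n, Measurable (F n))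
    (h0 : ∀ n x, 0 ≤ F n x) (h1 : ∀ n x, F n x ≤ 1) (hAP : ∀ n, IsAlmostPeriodic hT (F n))
    (hlim : ∀ x, Tendsto (fun n => F n x) atTop (nhds (g x))) : IsAlmostPeriodic hT g := by
  have hg : Measurable g := measurable_of_tendsto_metrizable hF (tendsto_pi_nhds.mpr hlim)
  have g0 : ∀ x, 0 ≤ g x := fun x => ge_of_tendsto' (hlim x) fun n => h0 n x
  have g1 : ∀ x, g x ≤ 1 := fun x => le_of_tendsto' (hlim x) fun n => h1 n x
  refine ⟨memLp_ofReal_of_mem_unitInterval hg g0 g1, ?_⟩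
  refine (isClosed_almostPeriodicVectors _).mem_of_tendsto
    (f := fun n => (memLp_ofReal_of_mem_unitInterval (hF n) (h0 n) (h1 n)).toLp _) (b := atTop) ?_
    (Eventually.of_forall fun n => (hAP n).2)
  have hint : Tendsto (fun n => ∫ x, |F n x - g x| ∂μ) atTop (nhds 0) := by
    have := tendsto_integral_of_dominated_convergence (μ := μ) (F := fun n x => |F n x - g x|)
      (f := fun _ => 0) (fun _ => (1 : ℝ)) (fun n => ((hF n).sub hg).abs.aestronglyMeasurable)
      (integrable_const _) (fun n => Eventually.of_forall fun x => ?_)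
      (Eventually.of_forall fun x => ?_)
    · simpa using this
    · rw [Real.norm_eq_abs, abs_abs, abs_le]
      constructor <;> linarith [h0 n x, h1 n x, g0 x, g1 x]
    · simpa using ((hlim x).sub_const (g x)).abs
  rw [tendsto_iff_dist_tendsto_zero]
  have hsqrt : Tendsto (fun n => √(∫ x, |F n x - g x| ∂μ)) atTop (nhds 0) := by
    simpa [Function.comp_def] using (Real.continuous_sqrt.tendsto 0).comp hint
  refine squeeze_zero (fun _ => dist_nonneg) (fun n => ?_) hsqrt
  exact Real.le_sqrt_of_sq_le (dist_toLp_sq_le (hF n) hg (h0 n) (h1 n) g0 g1)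

lemma isAlmostPeriodic_indicator_of_mem_lipschitzPosSets {ρ : X → X → ℝ} (hρ0 : ∀ x y, 0 ≤ ρ x y)
    (hent : ∀ ε : ℝ, 0 < ε → ∃ C : ℝ≥0∞, C ≠ ∞ ∧ ∀ n : ℕ, 1 ≤ n →
      epsEntropy μ (fun x y => (∑ k ∈ Finset.range n, ρ (T^[k] x) (T^[k] y)) / n) ε ≤ C)
    {s : Set X} (hs : s ∈ lipschitzPosSets ρ) :
    IsAlmostPeriodic hT (s.indicator fun _ => 1) := by
  obtain ⟨u, hu, hul, rfl⟩ := hs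
  have hm : ∀ m : ℕ, Measurable fun x => min 1 (m * max (u x) 0) := fun m =>
    measurable_const.min ((hu.max measurable_const).const_mul _)
  have h0 : ∀ (m : ℕ) x, 0 ≤ min 1 (m * max (u x) 0) := fun m x =>
    le_min zero_le_one (by positivity)
  have h1 : ∀ (m : ℕ) x, min 1 (m * max (u x) 0) ≤ 1 := fun m x => min_le_left _ _
  refine isAlmostPeriodic_of_tendsto hm h0 h1 (fun m => ⟨_,
    mem_almostPeriodicVectors_of_lipschitz hT hent (hm m) (h0 m) (h1 m) (Nat.cast_nonneg m)
      fun x y => ?_⟩) fun x => ?_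
  · refine (abs_min_sub_min_le_max _ _ _ _).trans (max_le ?_ ?_)
    · rw [sub_self, abs_zero]
      exact mul_nonneg (Nat.cast_nonneg m) (hρ0 x y)
    · rw [← mul_sub, abs_mul, Nat.abs_cast]
      refine mul_le_mul_of_nonneg_left ?_ (Nat.cast_nonneg m)
      refine (abs_max_sub_max_le_max _ _ _ _).trans (max_le (hul x y) ?_)
      simpa using hρ0 x y
  · by_cases hx : 0 < u x
    · rw [indicator_of_mem (show x ∈ {x | 0 < u x} from hx)]
      refine tendsto_const_nhds.congr' ?_
      obtain ⟨m₀, hm₀⟩ := exists_nat_gt (1 / u x)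
      filter_upwards [eventually_ge_atTop m₀] with m hmm
      rw [max_eq_left hx.le, min_eq_left]
      rw [div_lt_iff₀ hx] at hm₀
      refine hm₀.le.trans ?_
      gcongr
    · rw [indicator_of_notMem (show x ∉ {x | 0 < u x} from hx), max_eq_right (not_lt.mp hx)]
      simp

lemma isAlmostPeriodic_indicator_of_generateFrom {ρ : X → X → ℝ} (hρ0 : ∀ x y, 0 ≤ ρ x y)
    (hent : ∀ ε : ℝ, 0 < ε → ∃ C : ℝ≥0∞, C ≠ ∞ ∧ ∀ n : ℕ, 1 ≤ n →
      epsEntropy μ (fun x y => (∑ k ∈ Finset.range n, ρ (T^[k] x) (T^[k] y)) / n) ε ≤ C)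
    {s : Set X} (hs : MeasurableSet[MeasurableSpace.generateFrom (lipschitzPosSets ρ)] s) :
    IsAlmostPeriodic hT (s.indicator fun _ => 1) := by
  induction s, hs using MeasurableSpace.induction_on_inter rfl (isPiSystem_lipschitzPosSets ρ) with
  | empty => simpa using isAlmostPeriodic_const (hT := hT) 0
  | basic t ht => exact isAlmostPeriodic_indicator_of_mem_lipschitzPosSets hρ0 hent ht
  | compl t ht h =>
    convert (isAlmostPeriodic_const 1).sub h using 1
    ext x
    by_cases hx : x ∈ t <;> simp [hx]
  | iUnion f hd hf h =>
    have hle := generateFrom_lipschitzPosSets_le ρ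
    have hunion : ∀ n : ℕ,
        IsAlmostPeriodic hT ((⋃ i ∈ Finset.range n, f i).indicator fun _ => (1 : ℝ)) := by
      intro n
      induction n with
      | zero => simpa using isAlmostPeriodic_const (hT := hT) 0
      | succ n ih =>
        convert ih.add (h n) using 1
        rw [Finset.range_add_one, Finset.set_biUnion_insert, union_comm]
        refine indicator_union_of_disjoint ?_ _
        rw [disjoint_iUnion₂_left]
        exact fun i hi => hd (Finset.mem_range.mp hi).ne
    refine isAlmostPeriodic_of_tendsto (fun n => measurable_const.indicator
        (Finset.measurableSet_biUnion _ fun i _ => hle _ (hf i)))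
      (fun n x => indicator_nonneg (fun _ _ => zero_le_one) x)
      (fun n x => indicator_le' (g := fun _ => 1) (fun _ _ => le_rfl) (fun _ _ => zero_le_one) x)
      hunion fun x => ?_
    exact ((tendsto_indicator_biUnion_finset f (fun _ => (1 : ℝ)) x).comp
      tendsto_finset_range).mono_right (pure_le_nhds _)

/-- If the averages of an admissible metric have bounded entropies then the spectrum is purely
discrete. -/
lemma dense_span_of_bounded_entropies [StandardBorelSpace X] (hT : MeasurePreserving T μ μ)
    {ρ : X → X → ℝ} (hρ : IsMetricFun ρ) (hadm : Admissible μ ρ)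
    (hent : ∀ ε : ℝ, 0 < ε → ∃ C : ℝ≥0∞, C ≠ ∞ ∧ ∀ n : ℕ, 1 ≤ n →
      epsEntropy μ (fun x y => (∑ k ∈ Finset.range n, ρ (T^[k] x) (T^[k] y)) / n) ε ≤ C) :
    Dense ((Submodule.span ℂ {f : Lp ℂ 2 μ | ∃ c : ℂ, ∀ᵐ x ∂μ, f (T x) = c * f x} :
      Submodule ℂ (Lp ℂ 2 μ)) : Set (Lp ℂ 2 μ)) := by
  set U : Lp ℂ 2 μ →ₗᵢ[ℂ] Lp ℂ 2 μ := Lp.compMeasurePreservingₗᵢ ℂ T hT with hU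
  have htop : almostPeriodicVectors U = ⊤ := by
    refine almostPeriodicVectors_eq_top_of_indicator fun s hs => ?_
    obtain ⟨t, ht, hts⟩ := exists_ae_eq_generateFrom_lipschitzPosSets hρ hadm hs
    exact (isAlmostPeriodic_indicator_of_generateFrom hρ.1.1 hent ht).congr_ae
      (indicator_ae_eq_of_ae_eq_set hts)
  rw [setOf_eigenfunction_eq hT, Submodule.dense_iff_topologicalClosure_eq_top,
    Submodule.topologicalClosure_eq_top_iff, Submodule.eq_bot_iff]
  intro f hf
  refine eq_zero_of_totallyBounded_orbit U ?_ hf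
  have : f ∈ almostPeriodicVectors U := htop ▸ Submodule.mem_top
  exact this

end AlmostPeriodic

section ExistsMetric

variable {X : Type*} [MeasurableSpace X]

/-- A standard Borel probability space carries an admissible summable metric. -/
lemma exists_admissible_metric [StandardBorelSpace X] (μ : Measure X) [IsProbabilityMeasure μ] :
    ∃ ρ : X → X → ℝ, IsMetricFun ρ ∧ Admissible μ ρ ∧
      Integrable (Function.uncurry ρ) (μ.prod μ) := by
  have : Nonempty X := nonempty_of_isProbabilityMeasure μ
  obtain ⟨e, he⟩ := exists_measurableEmbedding_real X
  set f : X → ℝ := fun x => Real.arctan (e x) with hf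
  have hfm : Measurable f := Real.measurable_arctan.comp he.measurable
  have hm : Measurable (Function.uncurry fun x y => |f x - f y|) :=
    ((hfm.comp measurable_fst).sub (hfm.comp measurable_snd)).abs
  refine ⟨fun x y => |f x - f y|, ⟨⟨fun _ _ => abs_nonneg _, fun _ => by simp,
    fun _ _ => abs_sub_comm _ _, fun _ _ _ => abs_sub_le _ _ _⟩, fun x y => ?_⟩,
    ⟨hm, univ, MeasurableSet.univ, by simp, ?_⟩, ?_⟩
  · rw [abs_eq_zero, sub_eq_zero]
    exact ⟨fun h => he.injective (Real.arctan_injective h), fun h => h ▸ rfl⟩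
  · obtain ⟨c, hc, hcc, hcd⟩ :=
      (TopologicalSpace.IsSeparable.of_separableSpace (range f)).exists_countable_dense_subset
    choose! g hg using fun (t : ℝ) (ht : t ∈ c) => hc ht
    refine ⟨g '' c, subset_univ _, hcc.image g, fun x _ ε hε => ?_⟩
    obtain ⟨t, ht, htd⟩ := Metric.mem_closure_iff.mp (hcd (mem_range_self x)) ε hε
    refine ⟨g t, mem_image_of_mem g ht, ?_⟩
    dsimp only
    rwa [hg t ht, ← Real.dist_eq]
  · refine Integrable.of_bound hm.aestronglyMeasurable Real.pi (Eventually.of_forall fun p => ?_)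
    rw [Real.norm_eq_abs]
    simp only [Function.uncurry, hf, abs_abs]
    rw [abs_le]
    constructor <;> linarith [Real.arctan_lt_pi_div_two (e p.1),
      Real.neg_pi_div_two_lt_arctan (e p.1), Real.arctan_lt_pi_div_two (e p.2),
      Real.neg_pi_div_two_lt_arctan (e p.2)]

end ExistsMetric

section Discrete

variable {X : Type*} [MeasurableSpace X] {μ : Measure X}

/-- A countable family of measurable sets covering the space is turned into a partition, the tails
of which have small measure. -/
lemma exists_measurable_index [IsFiniteMeasure μ] {B : ℕ → Set X} (hB : ∀ l, MeasurableSet (B l))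
    (hcov : ∀ x, ∃ l, x ∈ B l) :
    ∃ J : X → ℕ, Measurable J ∧ (∀ x, x ∈ B (J x)) ∧
      Tendsto (fun N : ℕ => μ {x | N ≤ J x}) atTop (nhds 0) := by
  classical
  have hJ : Measurable fun x => Nat.find (hcov x) := measurable_find hcov hB
  refine ⟨fun x => Nat.find (hcov x), hJ, fun x => Nat.find_spec (hcov x), ?_⟩
  have hempty : ⋂ N : ℕ, {x | N ≤ Nat.find (hcov x)} = ∅ := by
    refine eq_empty_of_forall_notMem fun x hx => ?_
    exact Nat.not_succ_le_self _ (mem_iInter.mp hx (Nat.find (hcov x) + 1))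
  rw [← measure_empty (μ := μ), ← hempty]
  refine tendsto_measure_iInter_atTop
    (fun N => (measurableSet_le measurable_const hJ).nullMeasurableSet)
    (fun M N hMN x hx => le_trans hMN hx) ⟨0, measure_ne_top _ _⟩

lemma isEpsCover_of_index {ρ : X → X → ℝ} {ε : ℝ} {J : X → ℕ} (hJ : Measurable J) {Z : Set X}
    (hZ : MeasurableSet Z) {N : ℕ} (hN : ∀ x ∉ Z, J x < N) (hμZ : μ Z < ENNReal.ofReal ε)
    (h : ∀ x ∉ Z, ∀ y ∉ Z, J x = J y → ρ x y < ε) : IsEpsCover μ ρ ε N := by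
  refine ⟨Fin.cons Z fun i : Fin N => {x | J x = i} \ Z, ?_, ?_, hμZ, ?_⟩
  · refine Fin.cases hZ fun i => ?_
    exact (hJ (measurableSet_singleton (i : ℕ))).diff hZ
  · refine eq_univ_of_forall fun x => mem_iUnion.mpr ?_
    by_cases hx : x ∈ Z
    · exact ⟨0, hx⟩
    · exact ⟨Fin.succ ⟨J x, hN x hx⟩, rfl, hx⟩
  · refine Fin.cases (fun h0 => absurd rfl h0) fun i _ x hx y hy => ?_
    exact h x hx.2 y hy.2 (hx.1.trans hy.1.symm)

/-- An admissible summable semimetric is dominated by the semimetric of a bounded function, up to a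
correction which is small in `L¹`. -/
lemma exists_bounded_function_bound [IsProbabilityMeasure μ] {ρ : X → X → ℝ} (hρ : IsSemimetric ρ)
    (hadm : Admissible μ ρ) (hint : Integrable (Function.uncurry ρ) (μ.prod μ)) {δ : ℝ}
    (hδ : 0 < δ) :
    ∃ (f r : X → ℝ) (C : ℝ), Measurable f ∧ (∀ x, |f x| ≤ C) ∧ Measurable r ∧ (∀ x, 0 ≤ r x) ∧
      Integrable r μ ∧ ∫ x, r x ∂μ ≤ δ ∧ ∀ x y, ρ x y ≤ r x + r y + |f x - f y| := by
  obtain ⟨hnn, hdiag, hsymm, htri⟩ := hρ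
  obtain ⟨hm, S, hS, hμS, D, -, hDc, hD⟩ := hadm
  have hSne : S.Nonempty := by
    rw [nonempty_iff_ne_empty]
    rintro rfl
    simp at hμS
  have hDne : D.Nonempty := by
    obtain ⟨x, hx⟩ := hSne
    obtain ⟨y, hy, -⟩ := hD x hx 1 one_pos
    exact ⟨y, hy⟩
  obtain ⟨d, rfl⟩ := hDc.exists_eq_range hDne
  obtain ⟨x₀, hx₀⟩ := hint.prod_right_ae.exists
  have hcoord : ∀ d, Measurable fun x => ρ d x := fun d => hm.of_uncurry_left
  obtain ⟨J, hJ, hJB, hJlim⟩ := exists_measurable_index (μ := μ)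
    (B := fun l => {x | ρ (d l) x < δ / 2} ∪ Sᶜ)
    (fun l => (measurableSet_lt (hcoord _) measurable_const).union hS.compl) (fun x => by
      by_cases hx : x ∈ S
      · obtain ⟨_, ⟨l, rfl⟩, hl⟩ := hD x hx (δ / 2) (by positivity)
        exact ⟨l, Or.inl ((hsymm (d l) x).trans_lt hl)⟩
      · exact ⟨0, Or.inr hx⟩)
  have htail : Tendsto (fun N : ℕ => ∫ x in {x | N ≤ J x}, ρ x₀ x ∂μ) atTop (nhds 0) :=
    hx₀.tendsto_setIntegral_nhds_zero hJlim
  obtain ⟨N, hN⟩ := (htail.eventually_lt_const (half_pos hδ)).exists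
  let p : ℕ → X := fun l => if l < N then d l else x₀
  let J' : X → ℕ := fun x => min (J x) N
  have hJ' : Measurable J' := hJ.min measurable_const
  set M : ℝ := ∑ i ∈ Finset.range (N + 1), ∑ j ∈ Finset.range (N + 1), ρ (p i) (p j) with hM
  have hM0 : 0 ≤ M := Finset.sum_nonneg fun _ _ => Finset.sum_nonneg fun _ _ => hnn _ _
  have hpM : ∀ i ≤ N, ∀ j ≤ N, ρ (p i) (p j) ≤ M := by
    intro i hi j hj
    refine le_trans (Finset.single_le_sum (f := fun j => ρ (p i) (p j)) (fun _ _ => hnn _ _)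
      (Finset.mem_range.mpr (Nat.lt_succ_of_le hj))) ?_
    exact Finset.single_le_sum (f := fun i => ∑ j ∈ Finset.range (N + 1), ρ (p i) (p j))
      (fun _ _ => Finset.sum_nonneg fun _ _ => hnn _ _)
      (Finset.mem_range.mpr (Nat.lt_succ_of_le hi))
  have hrm : Measurable fun x => ρ (p (J' x)) x :=
    hm.comp (((measurable_from_nat (f := p)).comp hJ').prodMk measurable_id)
  have hset : MeasurableSet {x | N ≤ J x} := measurableSet_le measurable_const hJ
  have hbound : ∀ᵐ x ∂μ, ρ (p (J' x)) x ≤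
      δ / 2 + {x | N ≤ J x}.indicator (fun x => ρ x₀ x) x := by
    filter_upwards [mem_ae_iff.mpr hμS] with x hx
    by_cases hxN : N ≤ J x
    · have : p (J' x) = x₀ := by simp [p, J', hxN]
      rw [this, indicator_of_mem (show x ∈ {x | N ≤ J x} from hxN)]
      linarith
    · rw [indicator_of_notMem (show x ∉ {x | N ≤ J x} from hxN), add_zero]
      have : p (J' x) = d (J x) := by
        have h1 : J' x = J x := min_eq_left (not_le.mp hxN).le
        simp only [p, h1, if_pos (not_le.mp hxN)]
      rw [this]
      rcases hJB x with h | h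
      · exact le_of_lt h
      · exact absurd hx h
  have hbI : Integrable (fun x => δ / 2 + {x | N ≤ J x}.indicator (fun x => ρ x₀ x) x) μ :=
    (integrable_const _).add (hx₀.indicator hset)
  have hrI : Integrable (fun x => ρ (p (J' x)) x) μ := by
    refine hbI.mono' hrm.aestronglyMeasurable ?_
    filter_upwards [hbound] with x hx
    rwa [Real.norm_eq_abs, abs_of_nonneg (hnn _ _)]
  refine ⟨fun x => M * J' x, fun x => ρ (p (J' x)) x, M * N,
    (measurable_from_nat.comp hJ').const_mul M, fun x => ?_, hrm, fun x => hnn _ _, hrI, ?_,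
    fun x y => ?_⟩
  · rw [abs_of_nonneg (by positivity)]
    have : (J' x : ℝ) ≤ N := by exact_mod_cast min_le_right (J x) N
    exact mul_le_mul_of_nonneg_left this hM0
  · refine (integral_mono_ae hrI hbI hbound).trans ?_
    have h1 := integral_add (integrable_const (δ / 2)) (hx₀.indicator hset)
    simp only [Function.uncurry_apply_pair] at h1
    rw [h1, integral_indicator hset]
    simp only [integral_const, probReal_univ, one_smul]
    linarith
  · have h1 := htri x (p (J' x)) y
    have h2 := htri (p (J' x)) (p (J' y)) y
    rw [hsymm x (p (J' x))] at h1
    have h3 : ρ (p (J' x)) (p (J' y)) ≤ |M * J' x - M * J' y| := by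
      by_cases h : J' x = J' y
      · rw [h, hdiag]
        exact abs_nonneg _
      · refine (hpM _ (min_le_right _ _) _ (min_le_right _ _)).trans ?_
        rw [← mul_sub, abs_mul, abs_of_nonneg hM0]
        refine le_mul_of_one_le_right hM0 ?_
        have h4 : (1 : ℤ) ≤ |(J' x : ℤ) - J' y| :=
          Int.one_le_abs (sub_ne_zero.mpr (by exact_mod_cast h))
        exact_mod_cast h4
    dsimp only
    linarith

variable {T : X → X}

lemma ae_eigenfunction_iterate (hT : MeasurePreserving T μ μ) {φ : X → ℂ} {c : ℂ}
    (h : ∀ᵐ x ∂μ, φ (T x) = c * φ x) : ∀ᵐ x ∂μ, ∀ k : ℕ, φ (T^[k] x) = c ^ k * φ x := by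
  have h' : ∀ᵐ x ∂μ, ∀ k : ℕ, φ (T (T^[k] x)) = c * φ (T^[k] x) :=
    ae_all_iff.mpr fun k => (hT.iterate k).quasiMeasurePreserving.ae h
  filter_upwards [h'] with x hx k
  induction k with
  | zero => simp
  | succ k ih => rw [Function.iterate_succ_apply', hx, ih, pow_succ', mul_assoc]

variable [IsProbabilityMeasure μ]

lemma integral_norm_le_norm_of_L2 (e : Lp ℂ 2 μ) : ∫ x, ‖e x‖ ∂μ ≤ ‖e‖ := by
  rw [integral_norm_eq_lintegral_enorm (Lp.aestronglyMeasurable e),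
    ← eLpNorm_one_eq_lintegral_enorm,
    Lp.norm_def]
  refine ENNReal.toReal_mono (Lp.eLpNorm_ne_top e) ?_
  exact eLpNorm_le_eLpNorm_of_exponent_le one_le_two (Lp.aestronglyMeasurable e)

lemma exists_norm_le_one_of_eigenvector {H : Type*} [NormedAddCommGroup H] [InnerProductSpace ℂ H]
    (U : H →ₗᵢ[ℂ] H) {f : H} {c : ℂ} (h : U f = c • f) : ∃ c' : ℂ, ‖c'‖ ≤ 1 ∧ U f = c' • f := by
  by_cases hf : f = 0
  · exact ⟨0, by simp, by simp [hf]⟩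
  · refine ⟨c, le_of_mul_le_mul_right ?_ (norm_pos_iff.mpr hf), h⟩
    rw [← norm_smul, ← h, U.norm_map, one_mul]

/-- Under purely discrete spectrum, an admissible summable semimetric is dominated by a semimetric
built from finitely many eigenfunctions, up to a correction which is small in `L¹`. -/
lemma exists_eigenfunction_bound (hT : MeasurePreserving T μ μ)
    (hdense : Dense ((Submodule.span ℂ {f : Lp ℂ 2 μ | ∃ c : ℂ, ∀ᵐ x ∂μ, f (T x) = c * f x} :
      Submodule ℂ (Lp ℂ 2 μ)) : Set (Lp ℂ 2 μ)))
    {ρ : X → X → ℝ} (hρ : IsSemimetric ρ)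
    (hadm : Admissible μ ρ) (hint : Integrable (Function.uncurry ρ) (μ.prod μ)) {δ : ℝ}
    (hδ : 0 < δ) :
    ∃ (m : ℕ) (φ : Fin m → X → ℂ) (c : Fin m → ℂ) (R : X → ℝ), (∀ l, Measurable (φ l)) ∧
      (∀ l, ‖c l‖ ≤ 1) ∧ (∀ l, ∀ᵐ x ∂μ, φ l (T x) = c l * φ l x) ∧ Measurable R ∧
      (∀ x, 0 ≤ R x) ∧ Integrable R μ ∧ ∫ x, R x ∂μ ≤ δ ∧
      ∀ x y, ρ x y ≤ R x + R y + ∑ l, ‖φ l x - φ l y‖ := by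
  obtain ⟨f, r, C, hf, hfC, hr, hr0, hrI, hrδ, hρr⟩ :=
    exists_bounded_function_bound hρ hadm hint (half_pos hδ)
  have hfL : MemLp (fun x => (f x : ℂ)) 2 μ := by
    refine MemLp.of_bound (Complex.measurable_ofReal.comp hf).aestronglyMeasurable C
      (Eventually.of_forall fun x => ?_)
    rw [Complex.norm_real]
    exact hfC x
  rw [setOf_eigenfunction_eq hT] at hdense
  obtain ⟨g, hg, hgd⟩ := Metric.dense_iff.mp hdense (hfL.toLp _) (δ / 2) (half_pos hδ)
  obtain ⟨m, a, v, rfl⟩ := Submodule.mem_span_set'.mp hgd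
  have hev : ∀ l, ∃ c : ℂ, ‖c‖ ≤ 1 ∧
      Lp.compMeasurePreservingₗᵢ ℂ T hT (a l • (v l : Lp ℂ 2 μ)) =
        c • (a l • (v l : Lp ℂ 2 μ)) := by
    intro l
    obtain ⟨c, hc⟩ := (v l).2
    refine exists_norm_le_one_of_eigenvector _ (c := c) ?_
    rw [map_smul, hc, smul_comm]
  choose c hc1 hc using hev
  set φ : Fin m → Lp ℂ 2 μ := fun l => a l • (v l : Lp ℂ 2 μ) with hφ
  set e : X → ℝ := fun x => ‖(f x : ℂ) - ∑ l, φ l x‖ with he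
  have hφm : ∀ l, Measurable (φ l : X → ℂ) := fun l => (Lp.stronglyMeasurable (φ l)).measurable
  have hem : Measurable e := ((Complex.measurable_ofReal.comp hf).sub
    (Finset.measurable_fun_sum _ fun l _ => hφm l)).norm
  have hee : e =ᵐ[μ] fun x => ‖(hfL.toLp _ - ∑ l, φ l : Lp ℂ 2 μ) x‖ := by
    filter_upwards [Lp.coeFn_sub (hfL.toLp _) (∑ l, φ l), hfL.coeFn_toLp,
      Lp.coeFn_finsetSum Finset.univ φ] with x h1 h2 h3
    rw [h1, Pi.sub_apply, h2, h3]
    simp [he]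
  have hLI : Integrable (fun x => ‖(hfL.toLp _ - ∑ l, φ l : Lp ℂ 2 μ) x‖) μ :=
    ((Lp.memLp _).integrable one_le_two).norm
  have heI : Integrable e μ := hLI.congr hee.symm
  have heδ : ∫ x, e x ∂μ ≤ δ / 2 := by
    rw [integral_congr_ae hee]
    refine (integral_norm_le_norm_of_L2 _).trans ?_
    rw [← dist_eq_norm, dist_comm]
    exact (Metric.mem_ball.mp hg).le
  refine ⟨m, fun l => φ l, c, fun x => r x + e x, hφm, hc1, fun l => ?_, hr.add hem,
    fun x => add_nonneg (hr0 x) (norm_nonneg _), hrI.add heI, ?_, fun x y => ?_⟩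
  · have h1 : (Lp.compMeasurePreservingₗᵢ ℂ T hT (φ l) : X → ℂ) =ᵐ[μ] φ l ∘ T :=
      Lp.coeFn_compMeasurePreserving (φ l) hT
    have h2 := Lp.coeFn_smul (c l) (φ l)
    rw [hc l] at h1
    filter_upwards [h1, h2] with x hx1 hx2
    rw [hx2] at hx1
    exact hx1.symm
  · rw [integral_add hrI heI]
    linarith
  · have h1 : |f x - f y| ≤ e x + e y + ∑ l, ‖φ l x - φ l y‖ := by
      have h2 : ((f x - f y : ℝ) : ℂ) = ((f x : ℂ) - ∑ l, φ l x) - ((f y : ℂ) - ∑ l, φ l y) +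
          ∑ l, (φ l x - φ l y) := by
        rw [Finset.sum_sub_distrib]
        push_cast
        ring
      rw [← Real.norm_eq_abs, ← Complex.norm_real, h2]
      exact (norm_add_le _ _).trans (add_le_add (norm_sub_le _ _) (norm_sum_le _ _))
    linarith [hρr x y]

/-- Under purely discrete spectrum, the averages of admissible summable semimetrics have bounded
entropies. -/
lemma exists_entropy_bound_of_dense_span (hT : MeasurePreserving T μ μ)
    (hdense : Dense ((Submodule.span ℂ {f : Lp ℂ 2 μ | ∃ c : ℂ, ∀ᵐ x ∂μ, f (T x) = c * f x} :
      Submodule ℂ (Lp ℂ 2 μ)) : Set (Lp ℂ 2 μ)))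
    {ρ : X → X → ℝ} (hρ : IsSemimetric ρ)
    (hadm : Admissible μ ρ) (hint : Integrable (Function.uncurry ρ) (μ.prod μ)) {ε : ℝ}
    (hε : 0 < ε) :
    ∃ C : ℝ≥0∞, C ≠ ∞ ∧ ∀ n : ℕ, 1 ≤ n →
      epsEntropy μ (fun x y => (∑ k ∈ Finset.range n, ρ (T^[k] x) (T^[k] y)) / n) ε ≤ C := by
  obtain ⟨m, φ, c, R, hφ, hc, hφT, hR, hR0, hRI, hRδ, hρR⟩ :=
    exists_eigenfunction_bound hT hdense hρ hadm hint (δ := ε ^ 2 / 16) (by positivity)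
  let Φ : X → Fin m → ℂ := fun x l => φ l x
  have hΦ : Measurable Φ := measurable_pi_iff.mpr hφ
  set η := ε / (8 * (m + 1)) with hη
  have hη0 : 0 < η := by positivity
  obtain ⟨J, hJ, hJB, hJlim⟩ := exists_measurable_index (μ := μ)
    (B := fun l => {x | dist (Φ x) (TopologicalSpace.denseSeq (Fin m → ℂ) l) < η})
    (fun l => measurableSet_lt (hΦ.dist measurable_const) measurable_const) fun x => by
      obtain ⟨_, hy, ⟨l, rfl⟩⟩ := Metric.dense_iff.mp
        (TopologicalSpace.denseRange_denseSeq (Fin m → ℂ)) (Φ x) η hη0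
      refine ⟨l, ?_⟩
      rw [mem_ofPred_eq, dist_comm]
      exact hy
  obtain ⟨N, hN⟩ := (hJlim.eventually_lt_const
    (ENNReal.ofReal_pos.mpr (half_pos hε))).exists
  have hiter : ∀ᵐ x ∂μ, ∀ l, ∀ k : ℕ, φ l (T^[k] x) = c l ^ k * φ l x :=
    ae_all_iff.mpr fun l => ae_eigenfunction_iterate hT (hφT l)
  set E := toMeasurable μ {x | ¬ ∀ l, ∀ k : ℕ, φ l (T^[k] x) = c l ^ k * φ l x} with hE
  have hμE : μ E = 0 := by
    rw [hE, measure_toMeasurable]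
    exact hiter
  refine ⟨ENNReal.ofReal (Real.logb 2 N), ENNReal.ofReal_ne_top, fun n hn =>
    IsEpsCover.epsEntropy_le ?_⟩
  have hnpos : (0 : ℝ) < n := by exact_mod_cast hn
  set Rn : X → ℝ := fun x => (∑ k ∈ Finset.range n, R (T^[k] x)) / n with hRn
  have hRk : ∀ k, Measurable fun x => R (T^[k] x) := fun k => hR.comp (hT.iterate k).measurable
  have hRnm : Measurable Rn := (Finset.measurable_fun_sum _ fun k _ => hRk k).div_const _
  have hRkI : ∀ k, Integrable (fun x => R (T^[k] x)) μ := fun k =>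
    (hT.iterate k).integrable_comp_of_integrable hRI
  have hRnI : Integrable Rn μ := (integrable_finsetSum _ fun k _ => hRkI k).div_const _
  have hRnint : ∫ x, Rn x ∂μ = ∫ x, R x ∂μ := by
    have hk : ∀ k, ∫ x, R (T^[k] x) ∂μ = ∫ x, R x ∂μ := fun k => by
      rw [← integral_map (hT.iterate k).measurable.aemeasurable
        (f := R) hR.aestronglyMeasurable, (hT.iterate k).map_eq]
    rw [hRn, integral_div, integral_finsetSum _ fun k _ => hRkI k]
    simp only [hk, Finset.sum_const, Finset.card_range, nsmul_eq_mul]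
    field_simp
  have hmarkov : μ {x | ε / 4 ≤ Rn x} ≤ ENNReal.ofReal (ε / 4) := by
    have h1 := mul_meas_ge_le_integral_of_nonneg (μ := μ) (f := Rn) (Eventually.of_forall fun x =>
      div_nonneg (Finset.sum_nonneg fun _ _ => hR0 _) hnpos.le) hRnI (ε / 4)
    rw [hRnint] at h1
    have h2 : μ.real {x | ε / 4 ≤ Rn x} ≤ ε / 4 := by
      have h3 := h1.trans hRδ
      nlinarith
    rw [← ENNReal.ofReal_toReal (measure_ne_top μ {x | ε / 4 ≤ Rn x})]
    exact ENNReal.ofReal_le_ofReal h2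
  refine isEpsCover_of_index hJ (Z := {x | ε / 4 ≤ Rn x} ∪ {x | N ≤ J x} ∪ E)
    (((measurableSet_le measurable_const hRnm).union (measurableSet_le measurable_const hJ)).union
      (measurableSet_toMeasurable _ _)) (fun x hx => ?_) ?_ fun x hx y hy hxy => ?_
  · simp only [mem_union, mem_ofPred_eq, not_or, not_le] at hx
    exact hx.1.2
  · calc μ ({x | ε / 4 ≤ Rn x} ∪ {x | N ≤ J x} ∪ E)
        ≤ μ {x | ε / 4 ≤ Rn x} + μ {x | N ≤ J x} + μ E :=
          (measure_union_le _ _).trans (by gcongr; exact measure_union_le _ _)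
      _ < ENNReal.ofReal (ε / 4) + ENNReal.ofReal (ε / 2) := by
          rw [hμE, add_zero]
          exact ENNReal.add_lt_add_of_le_of_lt (measure_ne_top _ _) hmarkov hN
      _ ≤ ENNReal.ofReal ε := by
          rw [← ENNReal.ofReal_add (by positivity) (by positivity)]
          exact ENNReal.ofReal_le_ofReal (by linarith)
  · simp only [mem_union, mem_ofPred_eq, not_or, not_le] at hx hy
    have hgood : ∀ z ∉ E, ∀ l, ∀ k : ℕ, φ l (T^[k] z) = c l ^ k * φ l z := fun z hz => by
      by_contra hcon
      exact hz (subset_toMeasurable _ _ hcon)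
    have hxE := hgood x hx.2
    have hyE := hgood y hy.2
    have hτ : ∑ l, ‖φ l x - φ l y‖ ≤ ε / 4 := by
      have hd : dist (Φ x) (Φ y) ≤ 2 * η := by
        have h1 : dist (Φ x) (TopologicalSpace.denseSeq (Fin m → ℂ) (J x)) < η := hJB x
        have h2 : dist (Φ y) (TopologicalSpace.denseSeq (Fin m → ℂ) (J y)) < η := hJB y
        rw [← hxy] at h2
        linarith [dist_triangle_right (Φ x) (Φ y)
          (TopologicalSpace.denseSeq (Fin m → ℂ) (J x))]
      calc ∑ l, ‖φ l x - φ l y‖ ≤ ∑ _l : Fin m, 2 * η := Finset.sum_le_sum fun l _ => by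
            rw [← dist_eq_norm]
            exact (dist_le_pi_dist (Φ x) (Φ y) l).trans hd
        _ = m * (2 * η) := by simp
        _ ≤ (m + 1) * (2 * η) := by gcongr; linarith
        _ = ε / 4 := by
          rw [hη]
          field_simp
          norm_num
    have hk : ∀ k, ρ (T^[k] x) (T^[k] y) ≤ R (T^[k] x) + R (T^[k] y) + ε / 4 := fun k => by
      refine (hρR _ _).trans (add_le_add_right (le_trans (Finset.sum_le_sum fun l _ => ?_) hτ) _)
      rw [hxE, hyE, ← mul_sub, norm_mul, norm_pow]
      exact mul_le_of_le_one_left (norm_nonneg _) (pow_le_one₀ (norm_nonneg _) (hc l))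
    calc (∑ k ∈ Finset.range n, ρ (T^[k] x) (T^[k] y)) / n
        ≤ (∑ k ∈ Finset.range n, (R (T^[k] x) + R (T^[k] y) + ε / 4)) / n := by
          gcongr with k
          exact hk k
      _ = Rn x + Rn y + ε / 4 := by
          rw [Finset.sum_add_distrib, Finset.sum_add_distrib]
          simp only [hRn, Finset.sum_const, Finset.card_range, nsmul_eq_mul]
          field_simp
      _ < ε := by linarith [hx.1.1, hy.1.1]

end Discrete

/-- discreteness criterion for the spectrum: for an invertible
measure-preserving transformation `T` of a standard probability space `(X, μ)`, the
following are equivalent: (1) `T` has purely discrete spectrum (the eigenfunctions of the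
Koopman operator `f ↦ f ∘ T` span a dense subspace of `L²(X, μ)`); (2) for every
admissible summable semimetric `ρ` and every `ε > 0` the `ε`-entropies of the averages
`ρ_n^{av}(x,y) = n⁻¹ ∑_{k=0}^{n-1} ρ(T^k x, T^k y)` are uniformly bounded in `n`;
(3) the same holds for some admissible summable metric `ρ`. -/
theorem statement17 {X : Type*} [MeasurableSpace X] [StandardBorelSpace X]
    (μ : Measure X) [IsProbabilityMeasure μ] (T : X → X)
    (hT : MeasurePreserving T μ μ) (hbij : Function.Bijective T) :
    List.TFAE
      [ Dense ((Submodule.span ℂ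
          {f : Lp ℂ 2 μ | ∃ c : ℂ, ∀ᵐ x ∂μ, f (T x) = c * f x} :
            Submodule ℂ (Lp ℂ 2 μ)) : Set (Lp ℂ 2 μ)),
        ∀ ρ : X → X → ℝ, IsSemimetric ρ → Admissible μ ρ →
          Integrable (Function.uncurry ρ) (μ.prod μ) →
          ∀ ε : ℝ, 0 < ε → ∃ C : ℝ≥0∞, C ≠ ∞ ∧ ∀ n : ℕ, 1 ≤ n →
            epsEntropy μ
              (fun x y => (∑ k ∈ Finset.range n, ρ (T^[k] x) (T^[k] y)) / n) ε ≤ C,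
        ∃ ρ : X → X → ℝ, IsMetricFun ρ ∧ Admissible μ ρ ∧
          Integrable (Function.uncurry ρ) (μ.prod μ) ∧
          ∀ ε : ℝ, 0 < ε → ∃ C : ℝ≥0∞, C ≠ ∞ ∧ ∀ n : ℕ, 1 ≤ n →
            epsEntropy μ
              (fun x y => (∑ k ∈ Finset.range n, ρ (T^[k] x) (T^[k] y)) / n) ε ≤ C ] := by
  tfae_have 1 → 2 := fun h ρ hρ hadm hint ε hε =>
    exists_entropy_bound_of_dense_span hT h hρ hadm hint hε
  tfae_have 2 → 3 := fun h => by
    obtain ⟨ρ, hρ, hadm, hint⟩ := exists_admissible_metric μ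
    exact ⟨ρ, hρ, hadm, hint, h ρ hρ.1 hadm hint⟩
  tfae_have 3 → 1 := by
    rintro ⟨ρ, hρ, hadm, -, hent⟩
    exact dense_span_of_bounded_entropies hT hρ hadm hent
  tfae_finish
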